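/- The quotient group Theta is finite, of order 2^16 * 3^7 * 5^2 * 7 (= 25082265600). (This is the order of the automorphism group S_4 x (O_8^+(2):S_3) of the universal locally toroidal polytope {{3,3,4,3}_{(2,2,0,0)}, {3,4,3,3}_{(3,0,0,0)}}.) -/

import Mathlib

/-- Coxeter matrix of the string diagram [3,3,4,3,3] on generators a,b,c,d,e,f = 0..5. -/
def cox6 : Fin 6 → Fin 6 → ℕ := fun i j =>
  if i = j then 1
  else if (i : ℕ) + 1 = (j : ℕ) ∨ (j : ℕ) + 1 = (i : ℕ) then
    (if ((i : ℕ) = 2 ∧ (j : ℕ) = 3) ∨ ((i : ℕ) = 3 ∧ (j : ℕ) = 2) then 4 else 3)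
  else 2

def rels6 : Set (FreeGroup (Fin 6)) :=
  Set.range fun p : Fin 6 × Fin 6 => (FreeGroup.of p.1 * FreeGroup.of p.2) ^ cox6 p.1 p.2

/-- The Coxeter group of type [3,3,4,3,3]. -/
abbrev W : Type := PresentedGroup rels6

/-- The generators a,b,c,d,e,f of W, as w 0, ..., w 5. -/
def w (i : Fin 6) : W := PresentedGroup.of i

/-- sigma = d^(cb) = b*c*d*c*b. -/
def sg : W := w 1 * w 2 * w 3 * w 2 * w 1
/-- tau = c^(de) = e*d*c*d*e. -/
def tu : W := w 4 * w 3 * w 2 * w 3 * w 4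

/-- Theta: the quotient of W by the normal closure of (a σ τ)^4 and (f τ σ τ)^3. -/
abbrev Theta : Type :=
  W ⧸ Subgroup.normalClosure ({(w 0 * sg * tu) ^ 4, (w 5 * tu * sg * tu) ^ 3} : Set W)

/-- Images of the six generators in Theta. -/
def th (i : Fin 6) : Theta := QuotientGroup.mk (w i)

/-!
`Theta` acts on the 3-net of the Moufang loop of split octonions of norm one over `𝔽₂` and, through
its quotient `S₄` that kills `d, e, f`, on four further points. The conjugates of `f` correspond to
a class of `360` points of the net (their mirrors): the stabilizer of the mirror of `f` centralizes
`f`. Hence a relation between conjugates of `f` can be read off from their mirrors, and seven of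
them satisfy the relations of the Weyl group of type `E₇`. Together with the symmetric group `S₄`
generated by `a, b, c`, which normalizes it, this Weyl group is the whole stabilizer of the mirror:
the relator `(a σ τ)^4` writes `f` as a product of reflections. So
`|Theta| = 360 * |S₄| * |W(E₇)|`.

All indices come from coset enumerations that run inside a known permutation action. The orbit of a
point gives a lower bound for the index of its stabilizer. Conversely, if starting from a spanning
tree of the Schreier graph every edge is deduced by closing circuits that spell relators, or
generators of a subgroup `H` at the root, then the vertices of the orbit label the cosets of `H`, so
that `H` is the whole stabilizer.
-/

section Words

variable {G B : Type*} [Group G]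

/-- The value of a word in the letters `B` when the letter `s` stands for `g s`. -/
def wordProd (g : B → G) (u : List B) : G := (u.map g).prod

variable {g : B → G}

@[simp] theorem wordProd_nil : wordProd g [] = 1 := rfl

@[simp] theorem wordProd_cons (s : B) (u : List B) :
    wordProd g (s :: u) = g s * wordProd g u := List.prod_cons

@[simp] theorem wordProd_append (u v : List B) :
    wordProd g (u ++ v) = wordProd g u * wordProd g v := by
  simp only [wordProd, List.map_append, List.prod_append]

theorem wordProd_flatMap {C : Type*} (f : C → List B) (l : List C) :
    wordProd g (l.flatMap f) = wordProd (fun i => wordProd g (f i)) l := by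
  induction l with
  | nil => rfl
  | cons i l ih => rw [List.flatMap_cons, wordProd_append, wordProd_cons, ih]

theorem wordProd_flatten_replicate (u : List B) (n : ℕ) :
    wordProd g (List.replicate n u).flatten = wordProd g u ^ n := by
  induction n with
  | zero => simp
  | succ n ih => rw [List.replicate_succ, List.flatten_cons, wordProd_append, ih, pow_succ']

theorem wordProd_reverse (hg : ∀ s, g s * g s = 1) (u : List B) :
    wordProd g u.reverse = (wordProd g u)⁻¹ := by
  induction u with
  | nil => simp
  | cons s u ih =>
    rw [List.reverse_cons, wordProd_append, ih, wordProd_cons, wordProd_cons, wordProd_nil,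
      mul_one, mul_inv_rev, inv_eq_of_mul_eq_one_left (hg s)]

theorem wordProd_mem {H : Subgroup G} {u : List B} (h : ∀ s ∈ u, g s ∈ H) :
    wordProd g u ∈ H :=
  H.list_prod_mem (by simpa using h)

/-- The word `s t s t …` with `n` letters. -/
def alternating (s t : B) : ℕ → List B
  | 0 => []
  | n + 1 => s :: alternating t s n

theorem wordProd_alternating (hg : ∀ s, g s * g s = 1) (s t : B) (n : ℕ) :
    wordProd g (alternating s t n) = (g s * g t) ^ n * wordProd g (alternating t s n) := by
  induction n generalizing s t with
  | zero => simp [alternating]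
  | succ n ih =>
    have hts : (g t * g s) ^ n = ((g s * g t) ^ n)⁻¹ := by
      rw [← inv_pow, mul_inv_rev, inv_eq_of_mul_eq_one_left (hg s),
        inv_eq_of_mul_eq_one_left (hg t)]
    have hpow : (g s * g t) ^ (n + 1) * g t = g s * (g t * g s) ^ n := by
      rw [pow_succ, mul_assoc, mul_assoc (g s), hg, mul_one, ← mul_pow_mul]
    simp only [alternating, wordProd_cons]
    rw [ih s t, ← mul_assoc, ← mul_assoc, hpow, hts, inv_mul_cancel_right]

section TitsReduction

variable [DecidableEq B] (M : B → B → ℕ)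

/-- Tits' search for a word `v` such that `s :: v` has the same value as `u` in the Coxeter group
with matrix `M`: if `u` starts with another letter `t`, its tail is asked to begin with the
alternating word that completes a braid move exchanging `t` and `s`. -/
def pullFront : ℕ → B → List B → Option (List B)
  | 0, _, _ | _, _, [] => none
  | n + 1, s, t :: u =>
    if t = s then some u else
      match M s t with
      | 0 => none
      | m + 1 => ((alternating s t m).foldlM (fun v x => pullFront n x v) u).map
          (alternating t s m ++ ·)

/-- A reduced word for the value of `u` in the Coxeter group with matrix `M`, found letter by
letter from the right. -/
def titsReduce (u : List B) : List B :=
  u.foldr (fun s v => (pullFront M (v.length + 1) s v).getD (s :: v)) []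

variable {M}

theorem wordProd_of_pullFront (hg : ∀ s, g s * g s = 1) (hM : ∀ s t, (g s * g t) ^ M s t = 1)
    {n : ℕ} {s : B} {u v : List B} (h : pullFront M n s u = some v) :
    wordProd g u = g s * wordProd g v := by
  induction n generalizing s u v with
  | zero => simp [pullFront] at h
  | succ n ih =>
    have peel (l u v : List B) (h : l.foldlM (fun v x => pullFront M n x v) u = some v) :
        wordProd g u = wordProd g l * wordProd g v := by
      induction l generalizing u with
      | nil => simpa using congrArg (wordProd g) (Option.some.inj h)
      | cons x l ihl =>
        obtain ⟨w, hw, hl⟩ := Option.bind_eq_some_iff.mp h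
        rw [ih hw, ihl w hl, wordProd_cons, mul_assoc]
    match u with
    | [] => simp [pullFront] at h
    | t :: u =>
      by_cases hts : t = s
      · simp_all [pullFront]
      · rcases hm : M s t with _ | m
        · simp [pullFront, hts, hm] at h
        · simp only [pullFront, if_neg hts, hm, Option.map_eq_some_iff] at h
          obtain ⟨w, hw, rfl⟩ := h
          have braid := wordProd_alternating hg s t (m + 1)
          rw [← hm, hM, one_mul, hm] at braid
          rw [wordProd_cons, peel _ _ _ hw, ← mul_assoc, ← wordProd_cons, wordProd_append,
            ← mul_assoc, ← wordProd_cons]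
          exact congrArg (· * _) braid.symm

theorem wordProd_titsReduce (hg : ∀ s, g s * g s = 1) (hM : ∀ s t, (g s * g t) ^ M s t = 1)
    (u : List B) : wordProd g (titsReduce M u) = wordProd g u := by
  induction u with
  | nil => rfl
  | cons s u ih =>
    rw [wordProd_cons, ← ih]
    change wordProd g ((pullFront M _ s (titsReduce M u)).getD (s :: titsReduce M u)) = _
    rcases h : pullFront M _ s (titsReduce M u) with _ | v
    · rw [Option.getD_none, wordProd_cons]
    · rw [Option.getD_some, wordProd_of_pullFront hg hM h, ← mul_assoc, hg, one_mul]

theorem wordProd_eq_one_of_titsReduce (hg : ∀ s, g s * g s = 1)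
    (hM : ∀ s t, (g s * g t) ^ M s t = 1) {u : List B} (h : titsReduce M u = []) :
    wordProd g u = 1 := by
  rw [← wordProd_titsReduce hg hM, h, wordProd_nil]

end TitsReduction

end Words

section Subgroups

theorem card_sup_eq_mul {G : Type*} [Group G] {H K : Subgroup G} (hdisj : Disjoint H K)
    (hnorm : H ≤ Subgroup.normalizer (K : Set G)) :
    Nat.card ↥(H ⊔ K) = Nat.card H * Nat.card K := by
  have hcoe := Subgroup.coe_mul_of_left_le_normalizer_right H K hnorm
  have hrange : Set.range (fun x : H × K => (x.1 * x.2 : G)) = ↑(H ⊔ K) := by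
    rw [hcoe]
    ext x
    simp [Set.mem_mul]
  rw [← Nat.card_prod, ← Nat.card_range_of_injective (Subgroup.mul_injective_of_disjoint hdisj),
    hrange]
  rfl

end Subgroups

section ConjugateInvolutions

variable {G X : Type*} [Group G] {ψ : G →* Equiv.Perm X} {p : X} {t g h : G}

theorem conj_eq_conj_of_apply_eq (hstab : ∀ y, ψ y p = p → Commute t y) (hgh : ψ g p = ψ h p) :
    MulAut.conj g t = MulAut.conj h t := by
  have hcomm : Commute t (h⁻¹ * g) := hstab _ <| by
    rw [map_mul, map_inv, Equiv.Perm.mul_apply, hgh, ← Equiv.Perm.mul_apply, inv_mul_cancel,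
      Equiv.Perm.one_apply]
  calc
    MulAut.conj g t = h * ((h⁻¹ * g) * t) * g⁻¹ := by rw [MulAut.conj_apply]; group
    _ = MulAut.conj h t := by rw [← hcomm.eq, MulAut.conj_apply]; group

theorem conj_mul_self (ht : t * t = 1) : MulAut.conj g t * MulAut.conj g t = 1 := by
  rw [← map_mul, ht, map_one]

theorem conj_conj (x : G) : x * MulAut.conj h t * x⁻¹ = MulAut.conj (x * h) t := by
  rw [map_mul, MulAut.mul_apply, ← MulAut.conj_apply]

theorem conj_mul_conj_pow_two (ht : t * t = 1) (hstab : ∀ y, ψ y p = p → Commute t y)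
    (hgh : ψ (MulAut.conj g t * h) p = ψ h p) : (MulAut.conj g t * MulAut.conj h t) ^ 2 = 1 := by
  have hconj := conj_conj (t := t) (h := h) (MulAut.conj g t)
  rw [conj_eq_conj_of_apply_eq hstab hgh, inv_eq_of_mul_eq_one_left (conj_mul_self ht)] at hconj
  rw [pow_two, ← mul_assoc, hconj, conj_mul_self ht]

theorem conj_mul_conj_pow_three (ht : t * t = 1) (hstab : ∀ y, ψ y p = p → Commute t y)
    (hgh : ψ (MulAut.conj g t * h) p = ψ (MulAut.conj h t * g) p) :
    (MulAut.conj g t * MulAut.conj h t) ^ 3 = 1 := by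
  have hbraid := conj_eq_conj_of_apply_eq hstab hgh
  rw [← conj_conj, ← conj_conj, inv_eq_of_mul_eq_one_left (conj_mul_self ht),
    inv_eq_of_mul_eq_one_left (conj_mul_self ht)] at hbraid
  generalize hr : MulAut.conj g t = r at hbraid ⊢
  generalize hr' : MulAut.conj h t = r' at hbraid ⊢
  have hsq : r * r = 1 := hr ▸ conj_mul_self ht
  have hsq' : r' * r' = 1 := hr' ▸ conj_mul_self ht
  calc
    (r * r') ^ 3 = r * r' * r * (r' * r * r') := by
      simp only [pow_succ, pow_zero, one_mul, mul_assoc]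
    _ = r * (r' * (r * r) * r') * r := by rw [← hbraid]; simp only [mul_assoc]
    _ = 1 := by rw [hsq, mul_one, hsq', mul_one, hsq]

end ConjugateInvolutions

section CosetEnumeration

/-- `k n`, arranged so that kernel evaluation turns `n` into a numeral before entering `k`. The
functions to be evaluated in this file call recursors directly because the kernel unfolds
compiled structural recursion much more slowly. -/
def force {β : Type*} (n : ℕ) (k : ℕ → β) : β := Nat.rec (k 0) (fun m _ => k (m + 1)) n

@[simp] theorem force_eq {β : Type*} (n : ℕ) (k : ℕ → β) : force n k = k n := by
  cases n <;> rfl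

@[elab_as_elim]
theorem of_decide_force {P : ℕ → Prop} [DecidablePred P] (n : ℕ)
    (h : (force n fun m => decide (P m)) = true) : P n := by
  rwa [force_eq, decide_eq_true_iff] at h

/-- The left fold of `f` over a list, with every intermediate value forced. -/
def strictFold {α : Type*} (f : α → ℕ → ℕ) (l : List α) : ℕ → ℕ :=
  List.rec (fun K => K) (fun a _ rest K => force (f a K) rest) l

@[simp] theorem strictFold_cons {α : Type*} (f : α → ℕ → ℕ) (a : α) (l : List α) (x : ℕ) :
    strictFold f (a :: l) x = strictFold f l (f a x) :=
  force_eq ..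

theorem strictFold_induction {α : Type*} {f : α → ℕ → ℕ} {P : ℕ → Prop} {l : List α}
    (hf : ∀ a ∈ l, ∀ K, P K → P (f a K)) {K : ℕ} (hK : P K) : P (strictFold f l K) := by
  induction l generalizing K with
  | nil => exact hK
  | cons a l ih =>
    rw [strictFold_cons]
    exact ih (fun b hb => hf b (.tail a hb)) (hf a (.head l) K hK)

/-- The number of `x < N` such that `q x`, as `Nat.count` but for kernel evaluation. -/
def countBelow (q : ℕ → Bool) (N : ℕ) : ℕ := Nat.rec 0 (fun x n => bif q x then n + 1 else n) N

theorem countBelow_eq_count (q : ℕ → Bool) (N : ℕ) : countBelow q N = Nat.count (q · = true) N := by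
  induction N with
  | zero => simp [countBelow]
  | succ N ih =>
    change (bif q N then countBelow q N + 1 else countBelow q N) = _
    cases h : q N <;> simp [Nat.count_succ, ih, h]

variable (k : ℕ) (move : ℕ → ℕ → ℕ) (p : ℕ)

/-- Adds to the edge set `K` the edge labelled `s` at `x`, in both directions. Sets of edges of a
Schreier graph with labels `0, …, k - 1` are natural numbers whose bit `k * x + s` stands for the
edge from `x` to `move s x`. -/
def markEdge (x s K : ℕ) : ℕ := K ||| 1 <<< (k * x + s) ||| 1 <<< (k * move s x + s)

/-- Whether `x` is the root `p` or some edge at `x` belongs to `K`. -/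
def isTouched (K x : ℕ) : Bool := Nat.beq x p || !Nat.beq ((K >>> (k * x)) % 1 <<< k) 0

/-- Adds the edge labelled `s` at `x` if it joins the tree grown so far from the root `p` to a new
vertex. -/
def growEdge (x s K : ℕ) : ℕ :=
  bif isTouched k p K (move s x) then K else markEdge k move x s K

/-- Grows a tree rooted at `p` on the vertices below `N`, breadth first for the given number of
rounds. -/
def growTree (N rounds K : ℕ) : ℕ :=
  strictFold (fun _ => strictFold (fun x K =>
    bif isTouched k p K x then strictFold (growEdge k move p x) (List.range k) K else K)
    (List.range N)) (List.range rounds) K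

/-- The edges outside `K` on the path from `x` that spells `u`. -/
def missingEdges (K : ℕ) (u : List ℕ) : ℕ → List (ℕ × ℕ) :=
  List.rec (fun _ => []) (fun s _ rest x =>
    bif Nat.beq ((K >>> (k * x + s)) % 2) 1 then force (move s x) rest
    else (x, s) :: force (move s x) rest) u

/-- Adds to `K` the missing edge of the circuit `u` at `v` if there is exactly one. -/
def closeCircuit (v : ℕ) (u : List ℕ) (K : ℕ) : ℕ :=
  match missingEdges k move K u v with
  | [(x, s)] => bif isTouched k p K x then markEdge k move x s K else K
  | _ => K

/-- Coset enumeration on the vertices below `N`: the edges that are closed by a spanning tree rooted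
at `p`, the circuits `loops` at `p` and the circuits `rels` at every vertex reached. -/
def enumerate (N : ℕ) (rels loops : List (List ℕ)) (rounds passes : ℕ) : ℕ :=
  strictFold (fun _ K => strictFold (fun v K =>
      bif isTouched k p K v then strictFold (closeCircuit k move p v) rels K else K)
      (List.range N) (strictFold (closeCircuit k move p p) loops K))
    (List.range passes) (growTree k move p N rounds 0)

/-- The number of cosets found by `enumerate`, or `0` if at some vertex reached not all edges have
been found. -/
def countCosets (N : ℕ) (rels loops : List (List ℕ)) (rounds passes : ℕ) : ℕ :=
  force (enumerate k move p N rels loops rounds passes) fun K =>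
    bif Nat.blt K (1 <<< (k * N)) && Nat.beq 0 (countBelow (fun x => isTouched k p K x &&
        !Nat.beq ((K >>> (k * x)) % 1 <<< k) (1 <<< k - 1)) N) then
      countBelow (isTouched k p K) N
    else 0

section Soundness

variable {k : ℕ} {move : ℕ → ℕ → ℕ} {p : ℕ} {K x s : ℕ}

theorem isTouched_iff :
    isTouched k p K x = true ↔ x = p ∨ ∃ s < k, K.testBit (k * x + s) = true := by
  have hbits : (K >>> (k * x)) % 1 <<< k = 0 ↔ ∀ s < k, K.testBit (k * x + s) = false := by
    rw [Nat.one_shiftLeft]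
    refine ⟨fun h s hs => ?_, fun h => Nat.zero_of_testBit_eq_false fun s => ?_⟩
    · simpa [hs] using congrArg (Nat.testBit · s) h
    · by_cases hs : s < k <;> simp [hs, h]
  rw [isTouched, Bool.or_eq_true, Bool.not_eq_true', ← Bool.not_eq_true, Nat.beq_eq, Nat.beq_eq,
    hbits]
  simp

theorem testBit_markEdge {x' s' : ℕ} (hs : s < k) (hs' : s' < k) :
    (markEdge k move x s K).testBit (k * x' + s') = true ↔
      K.testBit (k * x' + s') = true ∨ (x' = x ∨ x' = move s x) ∧ s' = s := by
  have hinj (y : ℕ) : k * y + s = k * x' + s' ↔ x' = y ∧ s' = s := by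
    refine ⟨fun h => ?_, by rintro ⟨rfl, rfl⟩; rfl⟩
    have hk : 0 < k := by lia
    have hdiv := congrArg (· / k) h
    simp only [Nat.mul_add_div hk, Nat.div_eq_of_lt hs, Nat.div_eq_of_lt hs', add_zero] at hdiv
    exact ⟨hdiv.symm, by subst hdiv; lia⟩
  simp [markEdge, Nat.one_shiftLeft, Nat.testBit_or, Nat.testBit_two_pow, hinj]
  tauto

variable {G : Type*} [Group G] (ψ : G →* Equiv.Perm ℕ) (g : ℕ → G) (H : Subgroup G)

/-- The letters `s < k` stand for elements `g s` of order at most two that act on `ℕ` through `ψ`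
by `move s`. -/
structure ActsBy (k : ℕ) (move : ℕ → ℕ → ℕ) : Prop where
  mul_self : ∀ s, g s * g s = 1
  apply : ∀ s < k, ∀ x, ψ (g s) x = move s x

/-- The subgroup generated by the first `k` letters. -/
def lettersClosure (k : ℕ) : Subgroup G := Subgroup.closure (g '' Set.Iio k)

variable (k move p K) in
/-- `c` assigns cosets of `H` to the vertices so that the edges in `K` are edges of the Schreier
graph of `H`. -/
structure IsCosetLabelling (c : ℕ → G ⧸ H) : Prop where
  root : c p = (1 : G)
  edge : ∀ x, ∀ s < k, K.testBit (k * x + s) = true →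
    isTouched k p K (move s x) = true ∧ c x = g s • c (move s x)
  reach : ∀ x, isTouched k p K x = true → ∃ w ∈ lettersClosure g k, ψ w p = x ∧ c x = w

variable {ψ g H} {c : ℕ → G ⧸ H}

theorem mem_lettersClosure (hs : s < k) : g s ∈ lettersClosure g k :=
  Subgroup.subset_closure ⟨s, hs, rfl⟩

theorem ActsBy.move_move (hg : ActsBy ψ g k move) (hs : s < k) (x : ℕ) :
    move s (move s x) = x := by
  rw [← hg.apply s hs, ← hg.apply s hs, ← Equiv.Perm.mul_apply, ← map_mul, hg.mul_self, map_one,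
    Equiv.Perm.one_apply]

theorem isTouched_root : isTouched k p K p = true := isTouched_iff.mpr (.inl rfl)

theorem isTouched_markEdge {y : ℕ} (hs : s < k) :
    isTouched k p (markEdge k move x s K) y = true ↔
      isTouched k p K y = true ∨ y = x ∨ y = move s x := by
  simp only [isTouched_iff]
  constructor
  · rintro (h | ⟨t, ht, h⟩)
    · exact .inl (.inl h)
    · rcases (testBit_markEdge hs ht).mp h with h | h
      · exact .inl (.inr ⟨t, ht, h⟩)
      · exact .inr h.1
  · rintro ((h | ⟨t, ht, h⟩) | h)
    · exact .inl h
    · exact .inr ⟨t, ht, (testBit_markEdge hs ht).mpr (.inl h)⟩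
    · exact .inr ⟨s, hs, (testBit_markEdge hs hs).mpr (.inr ⟨h, rfl⟩)⟩

namespace IsCosetLabelling

theorem congr (h : IsCosetLabelling k move p K ψ g H c) {c' : ℕ → G ⧸ H}
    (hc : ∀ x, isTouched k p K x = true → c' x = c x) :
    IsCosetLabelling k move p K ψ g H c' where
  root := (hc p isTouched_root).trans h.root
  edge x s hs hx := by
    obtain ⟨hmove, hcx⟩ := h.edge x s hs hx
    rw [hc x (isTouched_iff.mpr (.inr ⟨s, hs, hx⟩)), hc _ hmove]
    exact ⟨hmove, hcx⟩
  reach x hx := by rw [hc x hx]; exact h.reach x hx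

theorem markEdge (hg : ActsBy ψ g k move) (h : IsCosetLabelling k move p K ψ g H c)
    (hx : isTouched k p K x = true) (hs : s < k) (hc : c x = g s • c (move s x)) :
    IsCosetLabelling k move p (markEdge k move x s K) ψ g H c where
  root := h.root
  edge y t ht hy := by
    rw [isTouched_markEdge hs]
    rcases (testBit_markEdge hs ht).mp hy with hy | ⟨rfl | rfl, rfl⟩
    · exact ⟨.inl (h.edge y t ht hy).1, (h.edge y t ht hy).2⟩
    · exact ⟨.inr (.inr rfl), hc⟩
    · rw [hg.move_move hs, hc, smul_smul, hg.mul_self, one_smul]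
      exact ⟨.inl hx, rfl⟩
  reach y hy := by
    rcases (isTouched_markEdge hs).mp hy with hy | rfl | rfl
    · exact h.reach y hy
    · exact h.reach y hx
    · obtain ⟨w, hw, rfl, hcw⟩ := h.reach x hx
      refine ⟨g s * w, mul_mem (mem_lettersClosure hs) hw, ?_, ?_⟩
      · rw [map_mul, Equiv.Perm.mul_apply, hg.apply s hs]
      · rw [← one_smul G (c _), ← hg.mul_self s, ← smul_smul, ← hc, hcw]
        rfl

theorem exists_growEdge (hg : ActsBy ψ g k move) (h : ∃ c, IsCosetLabelling k move p K ψ g H c)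
    (hx : isTouched k p K x = true) (hs : s < k) :
    ∃ c, IsCosetLabelling k move p (growEdge k move p x s K) ψ g H c := by
  obtain ⟨c, h⟩ := h
  rcases hnew : isTouched k p K (move s x) with _ | _
  · have hne (y : ℕ) (hy : isTouched k p K y = true) : y ≠ move s x := by
      rintro rfl
      simp [hnew] at hy
    rw [growEdge, hnew, cond_false]
    refine ⟨Function.update c (move s x) (g s • c x),
      (h.congr fun y hy => Function.update_of_ne (hne y hy) ..).markEdge hg hx hs ?_⟩
    rw [Function.update_self, Function.update_of_ne (hne x hx), smul_smul, hg.mul_self, one_smul]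
  · rw [growEdge, hnew, cond_true]
    exact ⟨c, h⟩

end IsCosetLabelling

theorem isTouched_growEdge {y : ℕ} (hs : s < k) (hy : isTouched k p K y = true) :
    isTouched k p (growEdge k move p x s K) y = true := by
  unfold growEdge
  cases isTouched k p K (move s x)
  · exact (isTouched_markEdge hs).mpr (.inl hy)
  · exact hy

theorem exists_isCosetLabelling_growTree (hg : ActsBy ψ g k move) (N rounds : ℕ)
    (h : ∃ c, IsCosetLabelling k move p K ψ g H c) :
    ∃ c, IsCosetLabelling k move p (growTree k move p N rounds K) ψ g H c := by
  let P K := ∃ c, IsCosetLabelling k move p K ψ g H c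
  refine strictFold_induction (P := P)
    (fun _ _ K hK => strictFold_induction (P := P) (fun x _ K hK => ?_) hK) h
  rcases hx : isTouched k p K x with _ | _
  · exact hK
  · refine (strictFold_induction (P := fun K => isTouched k p K x = true ∧ P K)
      (fun s hs K hK => ?_) ⟨hx, hK⟩).2
    rw [List.mem_range] at hs
    exact ⟨isTouched_growEdge hs hK.1, IsCosetLabelling.exists_growEdge hg hK.2 hK.1 hs⟩

theorem missingEdges_cons (u : List ℕ) :
    missingEdges k move K (s :: u) x =
      if K.testBit (k * x + s) = true then missingEdges k move K u (move s x)
      else (x, s) :: missingEdges k move K u (move s x) := by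
  have hbit : Nat.beq ((K >>> (k * x + s)) % 2) 1 = K.testBit (k * x + s) := by
    rw [Nat.testBit_eq_decide_div_mod_eq, Nat.shiftRight_eq_div_pow, Bool.eq_iff_iff, Nat.beq_eq,
      decide_eq_true_iff]
  change (bif _ then force _ (missingEdges k move K u) else _ :: force _ (missingEdges k move K u))
    = _
  rw [force_eq, hbit, cond_eq_ite]

theorem ActsBy.inv_apply_cons (hg : ActsBy ψ g k move) (hs : s < k) (u : List ℕ) (x : ℕ) :
    (ψ (wordProd g (s :: u)))⁻¹ x = (ψ (wordProd g u))⁻¹ (move s x) := by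
  have hinv : (ψ (g s))⁻¹ x = move s x := by
    rw [Equiv.Perm.inv_eq_iff_eq, hg.apply s hs, hg.move_move hs]
  rw [wordProd_cons, map_mul, mul_inv_rev, Equiv.Perm.mul_apply, hinv]

namespace IsCosetLabelling

theorem apply_of_missingEdges_eq_nil (hg : ActsBy ψ g k move)
    (h : IsCosetLabelling k move p K ψ g H c) {u : List ℕ} (hu : ∀ s ∈ u, s < k)
    (hnil : missingEdges k move K u x = []) :
    c x = wordProd g u • c ((ψ (wordProd g u))⁻¹ x) := by
  induction u generalizing x with
  | nil => simp
  | cons s u ih =>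
    rw [missingEdges_cons] at hnil
    split_ifs at hnil with hx
    rw [hg.inv_apply_cons (hu s (.head u)), (h.edge x s (hu s (.head u)) hx).2,
      ih (fun t ht => hu t (.tail s ht)) hnil, wordProd_cons, smul_smul]

theorem apply_of_missingEdges_eq_singleton (hg : ActsBy ψ g k move)
    (h : IsCosetLabelling k move p K ψ g H c) {u : List ℕ} (hu : ∀ s ∈ u, s < k) {y t : ℕ}
    (hone : missingEdges k move K u x = [(y, t)])
    (hx : c x = wordProd g u • c ((ψ (wordProd g u))⁻¹ x)) :
    t < k ∧ c y = g t • c (move t y) := by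
  induction u generalizing x with
  | nil => cases hone
  | cons s u ih =>
    have hs := hu s (.head u)
    have hu' (t : ℕ) (ht : t ∈ u) : t < k := hu t (.tail s ht)
    rw [hg.inv_apply_cons hs, wordProd_cons, ← smul_smul] at hx
    rw [missingEdges_cons] at hone
    split_ifs at hone with hbit
    · rw [(h.edge x s hs hbit).2, smul_left_cancel_iff] at hx
      exact ih hu' hone hx
    · obtain ⟨⟨rfl, rfl⟩, hnil⟩ : (x = y ∧ s = t) ∧ _ := by simpa using hone
      exact ⟨hs, hx.trans (congrArg _ (h.apply_of_missingEdges_eq_nil hg hu' hnil).symm)⟩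

theorem closeCircuit (hg : ActsBy ψ g k move) (h : IsCosetLabelling k move p K ψ g H c)
    {u : List ℕ} (hu : ∀ s ∈ u, s < k)
    (hx : c x = wordProd g u • c ((ψ (wordProd g u))⁻¹ x)) :
    IsCosetLabelling k move p (closeCircuit k move p x u K) ψ g H c := by
  unfold _root_.closeCircuit
  split
  · rename_i y t hone
    obtain ⟨ht, hy⟩ := h.apply_of_missingEdges_eq_singleton hg hu hone hx
    rcases htouched : isTouched k p K y with _ | _
    · exact h
    · exact h.markEdge hg htouched ht hy
  · exact h

end IsCosetLabelling

variable {rels loops : List (List ℕ)} {rounds passes N n : ℕ}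

theorem exists_isCosetLabelling_zero : ∃ c, IsCosetLabelling k move p 0 ψ g H c := by
  refine ⟨fun _ => (1 : G), rfl, fun x s _ h => by simp at h, fun x hx => ⟨1, one_mem _, ?_, rfl⟩⟩
  obtain rfl | ⟨s, -, h⟩ := isTouched_iff.mp hx
  · simp
  · simp at h

theorem exists_mem_of_isTouched_growTree (hg : ActsBy ψ g k move)
    (hx : isTouched k p (growTree k move p N rounds 0) x = true) :
    ∃ w ∈ lettersClosure g k, ψ w p = x := by
  obtain ⟨c, h⟩ := exists_isCosetLabelling_growTree (H := ⊥) hg N rounds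
    exists_isCosetLabelling_zero
  obtain ⟨w, hw, hwx, -⟩ := h.reach x hx
  exact ⟨w, hw, hwx⟩

theorem complete_of_countCosets (hp : p < N) (hn : n ≠ 0)
    (hcount : countCosets k move p N rels loops rounds passes = n)
    (hK : enumerate k move p N rels loops rounds passes = K) :
    (∀ x, isTouched k p K x = true → ∀ s < k, K.testBit (k * x + s) = true) ∧
      {x | isTouched k p K x = true}.ncard = n := by
  rw [countCosets, force_eq, hK] at hcount
  rcases hok : Nat.blt K (1 <<< (k * N)) && Nat.beq 0 (countBelow (fun x => isTouched k p K x &&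
    !Nat.beq ((K >>> (k * x)) % 1 <<< k) (1 <<< k - 1)) N) with _ | _
  · rw [hok] at hcount
    exact absurd hcount.symm hn
  rw [hok, cond_true, countBelow_eq_count] at hcount
  rw [Bool.and_eq_true, Nat.blt_eq, Nat.one_shiftLeft, Nat.beq_eq, countBelow_eq_count, eq_comm,
    Nat.count_eq_card_filter_range, Finset.card_eq_zero, Finset.filter_eq_empty_iff] at hok
  have hlt (x : ℕ) (hx : isTouched k p K x = true) : x < N := by
    obtain rfl | ⟨s, -, hbit⟩ := isTouched_iff.mp hx
    · exact hp
    · by_contra! hNx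
      have := Nat.testBit_lt_two_pow (hok.1.trans_le (Nat.pow_le_pow_right two_pos
        ((Nat.mul_le_mul_left k hNx).trans (Nat.le_add_right _ s))))
      simp [hbit] at this
  refine ⟨fun x hx s hs => ?_, ?_⟩
  · have hfull : (K >>> (k * x)) % 1 <<< k = 1 <<< k - 1 := by
      simpa [hx] using hok.2 (Finset.mem_range.mpr (hlt x hx))
    simpa [Nat.one_shiftLeft, hs] using congrArg (Nat.testBit · s) hfull
  · rw [← hcount, Nat.count_eq_card_filter_range, ← Set.ncard_coe_finset]
    congr
    ext x
    simpa using hlt x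

variable (k move p N rels loops rounds passes n ψ g H) in
/-- `countCosets` finds `n` cosets of the subgroup `H` generated by the circuits `loops`, in the
group generated by the letters `g s` that satisfy the relators `rels`. -/
structure IsCosetEnumeration : Prop where
  acts : ActsBy ψ g k move
  root_lt : p < N
  apply_root : ∀ h ∈ H, ψ h p = p
  letter_lt : ∀ u ∈ rels ++ loops, ∀ s ∈ u, s < k
  wordProd_rels : ∀ u ∈ rels, wordProd g u = 1
  wordProd_loops : ∀ u ∈ loops, wordProd g u ∈ H
  ne_zero : n ≠ 0
  count : countCosets k move p N rels loops rounds passes = n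

namespace IsCosetEnumeration

variable (E : IsCosetEnumeration k move p ψ g H rels loops rounds passes N n)
include E

theorem exists_isCosetLabelling :
    ∃ c, IsCosetLabelling k move p (enumerate k move p N rels loops rounds passes) ψ g H c := by
  obtain ⟨c, h⟩ := exists_isCosetLabelling_growTree (H := H) E.acts N rounds
    exists_isCosetLabelling_zero
  let P K := IsCosetLabelling k move p K ψ g H c
  refine ⟨c, strictFold_induction (P := P) (fun _ _ K hK => strictFold_induction (P := P)
    (fun x _ K hK => ?_)
    (strictFold_induction (P := P) (fun u hu K hK => ?_) hK)) h⟩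
  · rcases isTouched k p K x with _ | _
    · exact hK
    · exact strictFold_induction (P := P) (fun u hu K hK => hK.closeCircuit E.acts
        (E.letter_lt u (List.mem_append_left _ hu)) (by simp [E.wordProd_rels u hu])) hK
  · refine hK.closeCircuit E.acts (E.letter_lt u (List.mem_append_right _ hu)) ?_
    rw [← map_inv, E.apply_root _ (inv_mem (E.wordProd_loops u hu)), hK.root]
    exact QuotientGroup.eq.mpr (by simpa using E.wordProd_loops u hu)

theorem exists_touched_apply : ∃ (T : Set ℕ) (c : ℕ → G ⧸ H), T.ncard = n ∧ c p = (1 : G) ∧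
    (∀ x ∈ T, ∃ w ∈ lettersClosure g k, ψ w p = x) ∧
    ∀ y ∈ lettersClosure g k, ψ y p ∈ T ∧ c (ψ y p) = y := by
  obtain ⟨c, h⟩ := E.exists_isCosetLabelling
  obtain ⟨hfull, hcard⟩ := complete_of_countCosets E.root_lt E.ne_zero E.count rfl
  generalize enumerate k move p N rels loops rounds passes = K at h hfull hcard
  refine ⟨_, c, hcard, h.root, fun x hx => ?_, fun y hy => ?_⟩
  · obtain ⟨w, hw, hwx, -⟩ := h.reach x hx
    exact ⟨w, hw, hwx⟩
  have step {s : ℕ} (hs : s < k) {y : G} (hy : isTouched k p K (ψ y p) = true ∧ c (ψ y p) = y) :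
      isTouched k p K (ψ (g s * y) p) = true ∧ c (ψ (g s * y) p) = (g s * y : G) := by
    obtain ⟨htouched, hcy⟩ := h.edge _ s hs (hfull _ hy.1 s hs)
    rw [map_mul, Equiv.Perm.mul_apply, E.acts.apply s hs]
    refine ⟨htouched, ?_⟩
    rw [← one_smul G (c _), ← E.acts.mul_self s, ← smul_smul, ← hcy, hy.2]
    rfl
  induction hy using Subgroup.closure_induction_left with
  | one => simpa using ⟨isTouched_root, h.root⟩
  | mul_left _ hs y _ ih =>
    obtain ⟨s, hs, rfl⟩ := hs
    exact step hs ih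
  | inv_mul_cancel _ hs y _ ih =>
    obtain ⟨s, hs, rfl⟩ := hs
    rw [inv_eq_of_mul_eq_one_left (E.acts.mul_self s)]
    exact step hs ih

theorem mem_of_apply_eq {y : G} (hy : y ∈ lettersClosure g k) (hfix : ψ y p = p) : y ∈ H := by
  obtain ⟨T, c, -, hroot, -, hT⟩ := E.exists_touched_apply
  have hcy := (hT y hy).2
  rw [hfix, hroot] at hcy
  simpa using QuotientGroup.eq.mp hcy

theorem relIndex : H.relIndex (lettersClosure g k) = n := by
  obtain ⟨T, _, hcard, -, hreach, hT⟩ := E.exists_touched_apply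
  let Γ := lettersClosure g k
  let _ : MulAction Γ ℕ := MulAction.compHom ℕ (ψ.comp Γ.subtype)
  have hstab : MulAction.stabilizer Γ p = H.subgroupOf Γ := by
    ext y
    exact ⟨fun hy => E.mem_of_apply_eq y.2 hy, fun hy => E.apply_root y hy⟩
  have horbit : MulAction.orbit Γ p = T := by
    ext x
    refine ⟨?_, fun hx => ?_⟩
    · rintro ⟨y, rfl⟩
      exact (hT y y.2).1
    · obtain ⟨w, hw, rfl⟩ := hreach x hx
      exact ⟨⟨w, hw⟩, rfl⟩
  rw [Subgroup.relIndex, ← hstab, MulAction.index_stabilizer, horbit, hcard]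

end IsCosetEnumeration

end Soundness

end CosetEnumeration

section CoxeterWords

/-- The Coxeter matrix of a diagram, given by its edges `((s, t), m)` with label `m`. -/
def coxeterMatrix (E : List ((ℕ × ℕ) × ℕ)) (s t : ℕ) : ℕ :=
  if s = t then 1 else ((E.lookup (s, t)).or (E.lookup (t, s))).getD 2

/-- The defining relators of the Coxeter group with matrix `M` on the letters below `k`. -/
def coxeterRelators (M : ℕ → ℕ → ℕ) (k : ℕ) : List (List ℕ) :=
  (List.range k).flatMap fun t => (List.range (t + 1)).map fun s =>
    (List.replicate (M s t) [s, t]).flatten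

variable {M : ℕ → ℕ → ℕ} {k : ℕ}

theorem mem_coxeterRelators {u : List ℕ} :
    u ∈ coxeterRelators M k ↔
      ∃ t < k, ∃ s ≤ t, (List.replicate (M s t) [s, t]).flatten = u := by
  simp [coxeterRelators]

theorem lt_of_mem_coxeterRelators {u : List ℕ} (hu : u ∈ coxeterRelators M k) {s : ℕ}
    (hs : s ∈ u) : s < k := by
  obtain ⟨t, ht, r, hr, rfl⟩ := mem_coxeterRelators.mp hu
  obtain ⟨v, hv, hsv⟩ := List.mem_flatten.mp hs
  rw [List.eq_of_mem_replicate hv] at hsv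
  simp only [List.mem_cons, List.not_mem_nil, or_false] at hsv
  lia

theorem wordProd_coxeterRelators {G : Type*} [Group G] {g : ℕ → G} :
    (∀ u ∈ coxeterRelators M k, wordProd g u = 1) ↔
      ∀ t < k, ∀ s ≤ t, (g s * g t) ^ M s t = 1 := by
  have hword (s t : ℕ) :
      wordProd g (List.replicate (M s t) [s, t]).flatten = (g s * g t) ^ M s t := by
    simp [wordProd_flatten_replicate]
  refine ⟨fun h t ht s hs => ?_, fun h u hu => ?_⟩
  · rw [← hword]
    exact h _ (mem_coxeterRelators.mpr ⟨t, ht, s, hs, rfl⟩)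
  · obtain ⟨t, ht, s, hs, rfl⟩ := mem_coxeterRelators.mp hu
    rw [hword, h t ht s hs]

end CoxeterWords

section Chain

variable {k : ℕ} {move : ℕ → ℕ → ℕ} {G : Type*} [Group G] {ψ : G →* Equiv.Perm ℕ} {g : ℕ → G}

theorem ActsBy.mono (hg : ActsBy ψ g k move) {j : ℕ} (hj : j ≤ k) : ActsBy ψ g j move :=
  ⟨hg.mul_self, fun s hs => hg.apply s (hs.trans_le hj)⟩

theorem ActsBy.inv_apply (hg : ActsBy ψ g k move) {u : List ℕ} (hu : ∀ s ∈ u, s < k) (x : ℕ) :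
    (ψ (wordProd g u))⁻¹ x = strictFold move u x := by
  induction u generalizing x with
  | nil => simp [strictFold]
  | cons s u ih =>
    rw [hg.inv_apply_cons (hu s (.head u)), strictFold_cons, ih fun t ht => hu t (.tail s ht)]

theorem ActsBy.apply_eq_of_forall_move (hg : ActsBy ψ g k move) {x : ℕ}
    (hx : ∀ s < k, move s x = x) {y : G} (hy : y ∈ lettersClosure g k) : ψ y x = x := by
  induction hy using Subgroup.closure_induction with
  | mem _ hs =>
    obtain ⟨s, hs, rfl⟩ := hs
    rw [hg.apply s hs, hx s hs]
  | one => simp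
  | mul y z _ _ ihy ihz => rw [map_mul, Equiv.Perm.mul_apply, ihz, ihy]
  | inv y _ ih => rw [map_inv, Equiv.Perm.inv_eq_iff_eq, ih]

variable {M : ℕ → ℕ → ℕ} {base index : ℕ → ℕ} {N rounds passes : ℕ}

variable (k move M base index N rounds passes ψ g) in
/-- Coset enumeration along the chain of the subgroups generated by the first letters of a Coxeter
group: the group generated by `j + 1` letters moves the point `base j`, which the first `j` letters
fix, through `index j` positions. -/
structure IsCoxeterChain : Prop where
  acts : ActsBy ψ g k move
  wordProd_relators : ∀ u ∈ coxeterRelators M k, wordProd g u = 1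
  enumeration : ∀ j < k, base j < N ∧ index j ≠ 0 ∧ (∀ s < j, move s (base j) = base j) ∧
    countCosets (j + 1) move (base j) N (coxeterRelators M (j + 1))
      ((List.range j).map fun s => [s]) rounds passes = index j

namespace IsCoxeterChain

variable (C : IsCoxeterChain k move ψ g M base index N rounds passes)
include C

theorem isCosetEnumeration {j : ℕ} (hj : j < k) :
    IsCosetEnumeration (j + 1) move (base j) ψ g (lettersClosure g j) (coxeterRelators M (j + 1))
      ((List.range j).map fun s => [s]) rounds passes N (index j) := by
  obtain ⟨hN, hindex, hfix, hcount⟩ := C.enumeration j hj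
  refine ⟨C.acts.mono hj, hN, fun y => (C.acts.mono hj.le).apply_eq_of_forall_move hfix,
    fun u hu s hs => ?_, ?_, fun u hu => ?_, hindex, hcount⟩
  · obtain hu | hu := List.mem_append.mp hu
    · exact lt_of_mem_coxeterRelators hu hs
    · obtain ⟨t, ht, rfl⟩ := List.mem_map.mp hu
      rw [List.mem_singleton.mp hs]
      exact (List.mem_range.mp ht).trans j.lt_succ_self
  · exact wordProd_coxeterRelators.mpr fun t ht =>
      wordProd_coxeterRelators.mp C.wordProd_relators t (ht.trans_le hj)
  · obtain ⟨t, ht, rfl⟩ := List.mem_map.mp hu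
    simpa using mem_lettersClosure (List.mem_range.mp ht)

theorem card_lettersClosure : Nat.card (lettersClosure g k) = ∏ j ∈ Finset.range k, index j := by
  suffices ∀ j ≤ k, Nat.card (lettersClosure g j) = ∏ i ∈ Finset.range j, index i from this k le_rfl
  intro j hj
  induction j with
  | zero => simp [lettersClosure]
  | succ j ih =>
    have hle : lettersClosure g j ≤ lettersClosure g (j + 1) :=
      Subgroup.closure_mono (Set.image_mono (Set.Iio_subset_Iio j.le_succ))
    rw [Finset.prod_range_succ, ← ih (Nat.le_of_succ_le hj), ← (C.isCosetEnumeration hj).relIndex,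
      ← Subgroup.relIndex_bot_left, ← Subgroup.relIndex_bot_left,
      Subgroup.relIndex_mul_relIndex _ _ _ bot_le hle]

theorem eq_one_of_apply_base {y : G} (hy : y ∈ lettersClosure g k)
    (hfix : ∀ j < k, ψ y (base j) = base j) : y = 1 := by
  suffices ∀ j ≤ k, y ∈ lettersClosure g (k - j) by simpa [lettersClosure] using this k le_rfl
  intro j hj
  induction j with
  | zero => exact hy
  | succ j ih =>
    obtain ⟨i, hi⟩ : ∃ i, k - j = i + 1 := ⟨k - j - 1, by lia⟩
    rw [show k - (j + 1) = i by lia]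
    have := ih (Nat.le_of_succ_le hj)
    rw [hi] at this
    exact (C.isCosetEnumeration (by lia)).mem_of_apply_eq this (hfix i (by lia))

end IsCoxeterChain

end Chain

section Octonions

/-- Cyclic shift of the coordinates of a vector in `𝔽₂³`, the vector being encoded by the three
bits of a natural number. -/
def rotate (u : ℕ) : ℕ := (u <<< 1 ||| u >>> 2) % 8

/-- The dot product on `𝔽₂³`. -/
def dot (u v : ℕ) : ℕ := force (u &&& v) fun w => (w ^^^ w >>> 1 ^^^ w >>> 2) % 2

/-- The cross product on `𝔽₂³`. -/
def cross (u v : ℕ) : ℕ := rotate u &&& rotate (rotate v) ^^^ rotate (rotate u) &&& rotate v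

/-- A split octonion over `𝔽₂` as a Zorn vector matrix with rows `(α, u)` and `(v, β)`. -/
structure Octonion where
  (α β u v : ℕ)

namespace Octonion

/-- The octonion whose coordinates `α, u, v, β` are the eight bits of `x`, from the lowest. -/
def ofBits (x : ℕ) : Octonion := ⟨x % 2, x / 128 % 2, x / 2 % 8, x / 16 % 8⟩

/-- The code of an octonion, inverse to `Octonion.ofBits`. -/
def toBits (x : Octonion) : ℕ := x.α + 2 * x.u + 16 * x.v + 128 * x.β

/-- The unit of the octonions. -/
def one : Octonion := ⟨1, 1, 0, 0⟩

/-- Octonion conjugation, which inverts the octonions of norm one. -/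
def conj (x : Octonion) : Octonion := ⟨x.β, x.α, x.u, x.v⟩

/-- Zorn's multiplication. -/
def mul (x y : Octonion) : Octonion where
  α := x.α * y.α ^^^ dot x.u y.v
  β := x.β * y.β ^^^ dot x.v y.u
  u := x.α * y.u ^^^ y.β * x.u ^^^ cross x.v y.v
  v := y.α * x.v ^^^ x.β * y.v ^^^ cross x.u y.u

/-- The automorphism of the octonions given by the transvection `u ↦ u + ⟨u, φ⟩ a` of `𝔽₂³`. -/
def transvection (a φ : ℕ) (x : Octonion) : Octonion :=
  { x with u := x.u ^^^ dot x.u φ * a, v := x.v ^^^ dot x.v a * φ }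

/-- The reflection with mirror `(i, a)` of the 3-net of the octonions of norm one, whose points are
the pairs of a class modulo three and an octonion. -/
def reflect (i : ℕ) (a : Octonion) (j : ℕ) (x : Octonion) : ℕ × Octonion :=
  bif Nat.beq j i then (i, (a.mul x.conj).mul a)
  else bif Nat.beq j ((i + 1) % 3) then ((i + 2) % 3, (a.mul x).conj)
  else ((i + 1) % 3, (x.mul a).conj)

/-- The generator `s` of `Theta` as a permutation of the points of the net of the octonions. -/
def generator (s j : ℕ) (x : Octonion) : ℕ × Octonion :=
  match s with
  | 0 => (j, transvection 3 4 x)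
  | 1 => (j, transvection 6 6 x)
  | 2 => (j, transvection 3 3 x)
  | 3 => reflect 0 ⟨1, 1, 1, 0⟩ j x
  | 4 => reflect 1 one j x
  | _ => reflect 0 one j x

end Octonion

/-- The generators of `Theta` as permutations of the points `256 * j + x.toBits` of the net and of
four further points `768, …, 771`, on which `a, b, c` generate the symmetric group. -/
def pointMove (s x : ℕ) : ℕ :=
  bif Nat.blt x 768 then
    let y := Octonion.generator s (x / 256) (.ofBits (x % 256))
    256 * y.1 + y.2.toBits
  else bif Nat.blt s 3 && Nat.beq x (768 + s) then x + 1
  else bif Nat.blt s 3 && Nat.beq x (769 + s) then x - 1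
  else x

end Octonions

section Tables

/-- The entries `x ^^^ f s x < 1024` for `x < N` and `s < k`, packed into one number in base
`1024`. -/
def table (k N : ℕ) (f : ℕ → ℕ → ℕ) : ℕ :=
  strictFold (fun x => strictFold (fun s T => T ||| (x ^^^ f s x) <<< (10 * (k * x + s)))
    (List.range k)) (List.range N) 0

/-- The function packed into the table `T`; it fixes all `x` outside the table. -/
def tableMove (k T s x : ℕ) : ℕ := x ^^^ (T >>> (10 * (k * x + s))) % 1024

theorem tableMove_of_le {k N T s x : ℕ} (hT : T < 1024 ^ (k * N)) (hx : N ≤ x) :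
    tableMove k T s x = x := by
  have hlt : T < 2 ^ (10 * (k * x + s)) := calc
    T < (2 ^ 10) ^ (k * N) := hT
    _ = 2 ^ (10 * (k * N)) := (pow_mul ..).symm
    _ ≤ 2 ^ (10 * (k * x + s)) := by
      have : k * N ≤ k * x := by gcongr
      exact Nat.pow_le_pow_right two_pos (by omega)
  rw [tableMove, Nat.shiftRight_eq_zero T _ hlt, Nat.zero_mod, Nat.xor_zero]

end Tables

section Presentation

/-- The diagram of the Coxeter group `[3,3,4,3,3]`. -/
def thetaDiagram : List ((ℕ × ℕ) × ℕ) :=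
  [((0, 1), 3), ((1, 2), 3), ((2, 3), 4), ((3, 4), 3), ((4, 5), 3)]

/-- The word of `σ = bcdcb`. -/
def sigmaWord : List ℕ := [1, 2, 3, 2, 1]

/-- The word of `τ = edcde`. -/
def tauWord : List ℕ := [4, 3, 2, 3, 4]

/-- The word of `(a σ τ)^4`. -/
def relatorA : List ℕ := (List.replicate 4 (0 :: (sigmaWord ++ tauWord))).flatten

/-- The word of `(f τ σ τ)^3`. -/
def relatorF : List ℕ := (List.replicate 3 (5 :: (tauWord ++ sigmaWord ++ tauWord))).flatten

/-- The relators of `Theta` as words in the letters `0, …, 5` for `a, …, f`. -/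
def thetaRelators : List (List ℕ) :=
  relatorA :: relatorF :: coxeterRelators (coxeterMatrix thetaDiagram) 6

theorem coxeterMatrix_thetaDiagram (i j : Fin 6) :
    coxeterMatrix thetaDiagram i j = cox6 i j := by
  decide +revert

theorem cox6_comm (i j : Fin 6) : cox6 i j = cox6 j i := by
  decide +revert

variable {G : Type*} [Group G] {g : ℕ → G}

theorem wordProd_relatorA {φ : W →* G} (hφ : ∀ i : Fin 6, φ (w i) = g i) :
    wordProd g relatorA = φ ((w 0 * sg * tu) ^ 4) := by
  rw [relatorA, wordProd_flatten_replicate, map_pow]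
  simp [sigmaWord, tauWord, sg, tu, hφ, mul_assoc]

theorem wordProd_relatorF {φ : W →* G} (hφ : ∀ i : Fin 6, φ (w i) = g i) :
    wordProd g relatorF = φ ((w 5 * tu * sg * tu) ^ 3) := by
  rw [relatorF, wordProd_flatten_replicate, map_pow]
  simp [sigmaWord, tauWord, sg, tu, hφ, mul_assoc]

theorem exists_thetaHom (hg : ∀ u ∈ thetaRelators, wordProd g u = 1) :
    ∃ φ : Theta →* G, ∀ i : Fin 6, φ (th i) = g i := by
  have hcox : ∀ t < 6, ∀ s ≤ t, (g s * g t) ^ coxeterMatrix thetaDiagram s t = 1 :=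
    wordProd_coxeterRelators.mp fun u hu => hg u (.tail _ (.tail _ hu))
  have hsq (i : Fin 6) : g i * g i = 1 := by
    simpa [coxeterMatrix] using hcox i i.2 i le_rfl
  have hpair (i j : Fin 6) : (g i * g j) ^ cox6 i j = 1 := by
    rcases le_total i j with h | h
    · rw [← coxeterMatrix_thetaDiagram]
      exact hcox j j.2 i h
    · have hinv : g i * g j = (g j * g i)⁻¹ := by
        rw [mul_inv_rev, inv_eq_of_mul_eq_one_left (hsq i), inv_eq_of_mul_eq_one_left (hsq j)]
      rw [cox6_comm, ← coxeterMatrix_thetaDiagram, hinv, inv_pow, hcox i i.2 j h, inv_one]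
  let φ : W →* G := PresentedGroup.toGroup (f := fun i : Fin 6 => g i) (by
    rintro _ ⟨⟨i, j⟩, rfl⟩
    simpa using hpair i j)
  have hφ (i : Fin 6) : φ (w i) = g i := PresentedGroup.toGroup.of _
  refine ⟨QuotientGroup.lift _ φ (Subgroup.normalClosure_le_normal (N := φ.ker) ?_), hφ⟩
  rintro _ (rfl | rfl)
  · exact (wordProd_relatorA hφ).symm.trans (hg _ (.head _))
  · exact (wordProd_relatorF hφ).symm.trans (hg _ (.tail _ (.head _)))

end Presentation

section Letters

/-- The letters `0, …, 5` stand for the generators `a, …, f` of `Theta`, all others for `1`. -/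
def letter (s : ℕ) : Theta := if h : s < 6 then th ⟨s, h⟩ else 1

theorem letter_val (i : Fin 6) : letter i = th i := dif_pos i.2

theorem th_mul_pow_cox6 (i j : Fin 6) : (th i * th j) ^ cox6 i j = 1 := by
  have : (w i * w j) ^ cox6 i j = 1 := PresentedGroup.one_of_mem ⟨(i, j), rfl⟩
  exact congrArg (QuotientGroup.mk (s := Subgroup.normalClosure _)) this

theorem letter_mul_self (s : ℕ) : letter s * letter s = 1 := by
  unfold letter
  split_ifs with h
  · simpa [cox6] using th_mul_pow_cox6 ⟨s, h⟩ ⟨s, h⟩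
  · exact one_mul 1

theorem letter_mul_pow_coxeterMatrix (s t : ℕ) :
    (letter s * letter t) ^ coxeterMatrix thetaDiagram s t = 1 := by
  by_cases hst : s < 6 ∧ t < 6
  · lift s to Fin 6 using hst.1
    lift t to Fin 6 using hst.2
    rw [letter_val, letter_val, coxeterMatrix_thetaDiagram, th_mul_pow_cox6]
  · have hM : coxeterMatrix thetaDiagram s t = if s = t then 1 else 2 := by
      have hlookup (a b : ℕ) (h : ¬(a < 6 ∧ b < 6)) : thetaDiagram.lookup (a, b) = none := by
        rw [List.lookup_eq_none_iff]
        simp only [thetaDiagram, List.mem_cons, List.not_mem_nil, or_false]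
        rintro _ (rfl | rfl | rfl | rfl | rfl) <;> simp <;> lia
      rw [coxeterMatrix, hlookup s t hst, hlookup t s (by tauto)]
      rfl
    rw [hM]
    split_ifs with h
    · rw [h, letter_mul_self, one_pow]
    · have : letter s = 1 ∨ letter t = 1 := by
        simp only [letter]
        grind
      rcases this with h | h <;> rw [h] <;> simp [pow_two, letter_mul_self]

theorem wordProd_letter_thetaRelators {u : List ℕ} (hu : u ∈ thetaRelators) :
    wordProd letter u = 1 := by
  let N := Subgroup.normalClosure {(w 0 * sg * tu) ^ 4, (w 5 * tu * sg * tu) ^ 3}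
  have hmk (i : Fin 6) : QuotientGroup.mk' N (w i) = letter i := (letter_val i).symm
  have hone {x : W} (hx : x ∈ ({(w 0 * sg * tu) ^ 4, (w 5 * tu * sg * tu) ^ 3} : Set W)) :
      QuotientGroup.mk' N x = 1 :=
    (QuotientGroup.eq_one_iff x).mpr (Subgroup.subset_normalClosure hx)
  simp only [thetaRelators, List.mem_cons] at hu
  rcases hu with rfl | rfl | hu
  · exact (wordProd_relatorA hmk).trans (hone (.inl rfl))
  · exact (wordProd_relatorF hmk).trans (hone (.inr rfl))
  · exact wordProd_coxeterRelators.mpr (fun t _ s _ => letter_mul_pow_coxeterMatrix s t) u hu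

theorem wordProd_letter_eq_of_titsReduce {u v : List ℕ}
    (h : titsReduce (coxeterMatrix thetaDiagram) (u ++ v.reverse) = []) :
    wordProd letter u = wordProd letter v := by
  have := wordProd_eq_one_of_titsReduce letter_mul_self letter_mul_pow_coxeterMatrix h
  rwa [wordProd_append, wordProd_reverse letter_mul_self, mul_inv_eq_one] at this

theorem lettersClosure_letter : lettersClosure letter 6 = ⊤ := by
  rw [eq_top_iff]
  rintro x -
  obtain ⟨y, rfl⟩ := QuotientGroup.mk_surjective x
  have hy : y ∈ Subgroup.closure (Set.range (PresentedGroup.of (rels := rels6))) := by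
    rw [PresentedGroup.closure_range_of]
    trivial
  induction hy using Subgroup.closure_induction with
  | mem _ hy =>
    obtain ⟨i, rfl⟩ := hy
    have := mem_lettersClosure (g := letter) i.2
    rwa [letter_val] at this
  | one => exact one_mem _
  | mul _ _ _ _ hx hy => exact mul_mem hx hy
  | inv _ _ hx => exact inv_mem hx

end Letters

section PointAction

/-- The images of the points of the net under the generators of `Theta`. -/
def pointTable : ℕ := table 6 772 pointMove

/-- The point `(0, 1)` of the net, the mirror of the generator `f`. -/
abbrev basePoint : ℕ := 129

/-- The generator `s` of `Theta` acting on the points of the net. -/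
abbrev letterMove : ℕ → ℕ → ℕ := tableMove 6 pointTable

set_option maxRecDepth 100000 in
theorem pointTable_spec : pointTable < 1024 ^ (6 * 772) ∧
    ∀ x < 772, ∀ u ∈ thetaRelators, strictFold letterMove u x = x := by
  delta letterMove
  refine of_decide_force pointTable ?_
  decide +kernel

theorem letterMove_of_le {s x : ℕ} (hx : 772 ≤ x) : letterMove s x = x :=
  tableMove_of_le pointTable_spec.1 hx

theorem strictFold_letterMove_of_le {u : List ℕ} {x : ℕ} (hx : 772 ≤ x) :
    strictFold letterMove u x = x :=
  strictFold_induction (P := (· = x)) (fun s _ y (hy : y = x) => by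
    rw [hy]; exact letterMove_of_le hx) rfl

theorem strictFold_letterMove_thetaRelators {u : List ℕ} (hu : u ∈ thetaRelators) (x : ℕ) :
    strictFold letterMove u x = x := by
  rcases lt_or_ge x 772 with hx | hx
  · exact pointTable_spec.2 x hx u hu
  · exact strictFold_letterMove_of_le hx

theorem letterMove_involutive {s : ℕ} (hs : s < 6) : Function.Involutive (letterMove s) := by
  intro x
  have hss : [s, s] ∈ thetaRelators :=
    .tail _ (.tail _ (mem_coxeterRelators.mpr ⟨s, hs, s, le_rfl, by simp [coxeterMatrix]⟩))
  simpa [strictFold] using strictFold_letterMove_thetaRelators hss x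

/-- The permutation of the points of the net by the generator `s` of `Theta`. -/
def letterPerm (s : ℕ) : Equiv.Perm ℕ :=
  if hs : s < 6 then (letterMove_involutive hs).toPerm else 1

theorem actsBy_letterPerm : ActsBy (MonoidHom.id _) letterPerm 6 letterMove where
  mul_self s := by
    unfold letterPerm
    split_ifs with hs
    · ext x
      exact letterMove_involutive hs x
    · exact one_mul 1
  apply s hs x := by
    rw [MonoidHom.id_apply, letterPerm, dif_pos hs]
    rfl

theorem lt_of_mem_thetaRelators {u : List ℕ} (hu : u ∈ thetaRelators) {s : ℕ} (hs : s ∈ u) :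
    s < 6 := by
  have : ∀ u ∈ thetaRelators, ∀ s ∈ u, s < 6 := by decide
  exact this u hu s hs

theorem exists_pointHom : ∃ ψ : Theta →* Equiv.Perm ℕ, ActsBy ψ letter 6 letterMove := by
  obtain ⟨ψ, hψ⟩ := exists_thetaHom (g := letterPerm) fun u hu => inv_eq_one.mp <| by
    ext x
    exact (actsBy_letterPerm.inv_apply (fun s hs => lt_of_mem_thetaRelators hu hs) x).trans
      (strictFold_letterMove_thetaRelators hu x)
  refine ⟨ψ, letter_mul_self, fun s hs x => ?_⟩
  lift s to Fin 6 using hs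
  rw [letter_val, hψ]
  exact actsBy_letterPerm.apply s s.2 x

/-- The action of `Theta` on the points of the net. -/
noncomputable def pointHom : Theta →* Equiv.Perm ℕ := exists_pointHom.choose

theorem actsBy_pointHom : ActsBy pointHom letter 6 letterMove := exists_pointHom.choose_spec

theorem pointHom_inv_wordProd {u : List ℕ} (hu : ∀ s ∈ u, s < 6) (x : ℕ) :
    pointHom (wordProd letter u)⁻¹ x = strictFold letterMove u x := by
  rw [map_inv, actsBy_pointHom.inv_apply hu]

end PointAction

section Transpositions

/-- The word of the conjugate of `f` by the inverse of the word `u`. -/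
def transpositionWord (u : List ℕ) : List ℕ := u.reverse ++ 5 :: u

/-- The conjugate of the generator `f` of `Theta` by `h`. It depends only on its mirror, the point
`pointHom h basePoint`. -/
abbrev transposition (h : Theta) : Theta := MulAut.conj h (letter 5)

theorem wordProd_transpositionWord (u : List ℕ) :
    wordProd letter (transpositionWord u) = transposition (wordProd letter u)⁻¹ := by
  rw [transpositionWord, wordProd_append, wordProd_reverse letter_mul_self, wordProd_cons,
    transposition, MulAut.conj_apply, inv_inv]
  exact (mul_assoc ..).symm

theorem lt_of_mem_transpositionWord {u : List ℕ} (hu : ∀ s ∈ u, s < 6) :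
    ∀ s ∈ transpositionWord u, s < 6 := by
  simp only [transpositionWord, List.mem_append, List.mem_reverse, List.mem_cons]
  rintro s (hs | rfl | hs)
  exacts [hu s hs, by norm_num, hu s hs]

/-- The generators of the stabilizer of `basePoint` that close the coset enumeration. -/
def stabilizerWords : List (List ℕ) :=
  [[0], [1], [2], [3], [5]] ++
    [tauWord, tauWord ++ [1], tauWord ++ [1, 2], tauWord ++ [1, 2, 0]].map transpositionWord

set_option maxRecDepth 100000 in
theorem countCosets_stabilizerWords :
    countCosets 6 letterMove basePoint 768 thetaRelators stabilizerWords 11 3 = 360 := by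
  delta letterMove
  refine of_decide_force pointTable ?_
  decide +kernel

theorem isCosetEnumeration_stabilizerWords {H : Subgroup Theta}
    (hfix : ∀ h ∈ H, pointHom h basePoint = basePoint)
    (hmem : ∀ u ∈ stabilizerWords, wordProd letter u ∈ H) :
    IsCosetEnumeration 6 letterMove basePoint pointHom letter H thetaRelators stabilizerWords 11 3
      768 360 where
  acts := actsBy_pointHom
  root_lt := by norm_num
  apply_root := hfix
  letter_lt := by decide
  wordProd_rels _ := wordProd_letter_thetaRelators
  wordProd_loops := hmem
  ne_zero := by norm_num
  count := countCosets_stabilizerWords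

set_option maxRecDepth 100000 in
theorem pointHom_stabilizerWords :
    ∀ u ∈ stabilizerWords, pointHom (wordProd letter u) basePoint = basePoint := by
  intro u hu
  have hlt : ∀ u ∈ stabilizerWords, ∀ s ∈ u, s < 6 := by decide
  have hfix : ∀ u ∈ stabilizerWords, strictFold letterMove u basePoint = basePoint := by
    delta letterMove
    refine of_decide_force pointTable ?_
    decide +kernel
  have := pointHom_inv_wordProd (hlt u hu) basePoint
  rw [hfix u hu, map_inv, Equiv.Perm.inv_eq_iff_eq] at this
  exact this.symm

theorem commute_letter_five_stabilizerWords {u : List ℕ} (hu : u ∈ stabilizerWords) :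
    Commute (letter 5) (wordProd letter u) := by
  have h : ∀ u ∈ stabilizerWords,
      titsReduce (coxeterMatrix thetaDiagram) ((5 :: u) ++ (u ++ [5]).reverse) = [] := by
    decide +kernel
  simpa [Commute, SemiconjBy] using wordProd_letter_eq_of_titsReduce (h u hu)

theorem commute_letter_five_of_pointHom (h : Theta) (hh : pointHom h basePoint = basePoint) :
    Commute (letter 5) h := by
  let H := (MulAction.stabilizer (Equiv.Perm ℕ) basePoint).comap pointHom ⊓
    Subgroup.centralizer {letter 5}
  have E := isCosetEnumeration_stabilizerWords (H := H) (fun h hh => hh.1) fun u hu =>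
    ⟨pointHom_stabilizerWords u hu, Subgroup.mem_centralizer_singleton_iff.mpr
      (commute_letter_five_stabilizerWords hu).symm.eq⟩
  have := E.mem_of_apply_eq (lettersClosure_letter ▸ Subgroup.mem_top h) hh
  exact (Subgroup.mem_centralizer_singleton_iff.mp this.2).symm

end Transpositions

section Roots

/-- Words for elements of `Theta` whose inverses carry `f` to the simple reflections of the Weyl
group of type `E₇`. -/
def rootWord (s : ℕ) : List ℕ :=
  [[4, 3, 5, 4, 2, 1, 0], tauWord ++ [1, 2], tauWord ++ [1], [4, 3, 5, 4, 2], tauWord,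
    [4, 3, 5, 4, 2, 1], tauWord ++ [1, 2, 0]].getD s []

/-- The simple reflections of the Weyl group of type `E₇`, as elements of `Theta`. -/
def reflection (s : ℕ) : Theta := transposition (wordProd letter (rootWord s))⁻¹

/-- The Dynkin diagram `E₇`. -/
def e7Diagram : List ((ℕ × ℕ) × ℕ) :=
  [((0, 1), 3), ((0, 2), 3), ((2, 3), 3), ((0, 4), 3), ((4, 5), 3), ((5, 6), 3)]

theorem lt_of_mem_rootWord : ∀ s < 7, ∀ t ∈ rootWord s, t < 6 := by decide

/-- The action of the simple reflection `s` on the points of the net. -/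
def reflectionMove (s : ℕ) : ℕ → ℕ := strictFold letterMove (transpositionWord (rootWord s))

theorem pointHom_reflection {s : ℕ} (hs : s < 7) (x : ℕ) :
    pointHom (reflection s) x = reflectionMove s x := by
  rw [reflectionMove,
    ← pointHom_inv_wordProd (lt_of_mem_transpositionWord (lt_of_mem_rootWord s hs)),
    wordProd_transpositionWord, inv_eq_of_mul_eq_one_left (conj_mul_self (letter_mul_self 5)),
    reflection]

/-- The images of the points of the net under the simple reflections. -/
def reflectionTable : ℕ := table 7 772 reflectionMove

set_option maxRecDepth 100000 in
theorem reflectionTable_spec : reflectionTable < 1024 ^ (7 * 772) ∧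
    ∀ x < 772, ∀ s < 7, tableMove 7 reflectionTable s x = reflectionMove s x := by
  refine of_decide_force reflectionTable ?_
  delta reflectionTable reflectionMove letterMove
  refine of_decide_force pointTable ?_
  decide +kernel

theorem actsBy_reflection : ActsBy pointHom reflection 7 (tableMove 7 reflectionTable) where
  mul_self _ := conj_mul_self (letter_mul_self 5)
  apply s hs x := by
    rw [pointHom_reflection hs]
    rcases lt_or_ge x 772 with hx | hx
    · exact (reflectionTable_spec.2 x hx s hs).symm
    · rw [tableMove_of_le reflectionTable_spec.1 hx]
      exact strictFold_letterMove_of_le hx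

set_option maxRecDepth 100000 in
theorem mirror_rootWord : ∀ t < 7, ∀ s ≤ t, s = t ∨
    coxeterMatrix e7Diagram s t = 2 ∧
      strictFold letterMove (rootWord t ++ transpositionWord (rootWord s)) basePoint =
        strictFold letterMove (rootWord t) basePoint ∨
    coxeterMatrix e7Diagram s t = 3 ∧
      strictFold letterMove (rootWord t ++ transpositionWord (rootWord s)) basePoint =
        strictFold letterMove (rootWord s ++ transpositionWord (rootWord t)) basePoint := by
  delta letterMove
  refine of_decide_force pointTable ?_
  decide +kernel

theorem pointHom_transposition_mul {u v : List ℕ} (hu : ∀ s ∈ u, s < 6) (hv : ∀ s ∈ v, s < 6) :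
    pointHom (transposition (wordProd letter u)⁻¹ * (wordProd letter v)⁻¹) basePoint =
      strictFold letterMove (v ++ transpositionWord u) basePoint := by
  have hlt : ∀ s ∈ v ++ transpositionWord u, s < 6 := fun s hs =>
    (List.mem_append.mp hs).elim (hv s) (lt_of_mem_transpositionWord hu s)
  rw [← pointHom_inv_wordProd hlt, wordProd_append, mul_inv_rev, wordProd_transpositionWord,
    inv_eq_of_mul_eq_one_left (conj_mul_self (letter_mul_self 5))]

theorem reflection_mul_pow {s t : ℕ} (ht : t < 7) (hst : s ≤ t) :
    (reflection s * reflection t) ^ coxeterMatrix e7Diagram s t = 1 := by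
  have hs := lt_of_mem_rootWord s (hst.trans_lt ht)
  have ht' := lt_of_mem_rootWord t ht
  rcases mirror_rootWord t ht s hst with rfl | ⟨hM, h⟩ | ⟨hM, h⟩
  · rw [coxeterMatrix, if_pos rfl, pow_one]
    exact conj_mul_self (letter_mul_self 5)
  · rw [hM]
    refine conj_mul_conj_pow_two (letter_mul_self 5) commute_letter_five_of_pointHom ?_
    rw [pointHom_transposition_mul hs ht', h, pointHom_inv_wordProd ht']
  · rw [hM]
    refine conj_mul_conj_pow_three (letter_mul_self 5) commute_letter_five_of_pointHom ?_
    rw [pointHom_transposition_mul hs ht', h, pointHom_transposition_mul ht' hs]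

/-- The subgroup of `Theta` generated by the simple reflections, a Weyl group of type `E₇`. -/
def reflectionGroup : Subgroup Theta := lettersClosure reflection 7

/-- A point that the simple reflections `s < j` fix and the simple reflection `j` moves. -/
def e7Base (j : ℕ) : ℕ := [157, 131, 133, 237, 137, 219, 254].getD j 0

/-- The index in the parabolic subgroup generated by the simple reflections `s ≤ j` of that
generated by those with `s < j`. -/
def e7Index (j : ℕ) : ℕ := [2, 3, 4, 5, 16, 27, 56].getD j 0

set_option maxRecDepth 100000 in
theorem countCosets_e7 : ∀ j < 7, e7Base j < 256 ∧ e7Index j ≠ 0 ∧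
    (∀ s < j, tableMove 7 reflectionTable s (e7Base j) = e7Base j) ∧
    countCosets (j + 1) (tableMove 7 reflectionTable) (e7Base j) 256
      (coxeterRelators (coxeterMatrix e7Diagram) (j + 1)) ((List.range j).map fun s => [s]) 14 6 =
        e7Index j :=
  of_decide_force reflectionTable (by decide +kernel)

theorem isCoxeterChain_reflection : IsCoxeterChain 7 (tableMove 7 reflectionTable) pointHom
    reflection (coxeterMatrix e7Diagram) e7Base e7Index 256 14 6 where
  acts := actsBy_reflection
  wordProd_relators := wordProd_coxeterRelators.mpr fun _ ht _ hst => reflection_mul_pow ht hst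
  enumeration := countCosets_e7

theorem card_reflectionGroup : Nat.card reflectionGroup = 2903040 :=
  isCoxeterChain_reflection.card_lettersClosure.trans (by decide)

end Roots

section Membership

/-- The transpositions of `wordsBefore`, the generator `f` and the transpositions of `wordsAfter`,
multiplied in this order, give a conjugate of the relator `(a σ τ)^4`. -/
def wordsBefore : List (List ℕ) :=
  [tauWord ++ [1, 2, 0, 1], [4, 3, 2, 3, 1, 2, 3, 0, 1, 2, 3, 4], tauWord]

/-- The second part of the factorization begun in `wordsBefore`. -/
def wordsAfter : List (List ℕ) :=
  [tauWord ++ [1, 2], tauWord ++ [1], tauWord ++ [1, 0], tauWord ++ [1, 2, 0]]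

/-- The words whose transpositions are to be recognized as reflections of the Weyl group of type
`E₇`: those needed to express `d` and `f`, and the conjugates of the simple reflections by
`a`, `b`, `c`. -/
def reflectionWords : List (List ℕ) :=
  [4, 3, 5, 4] :: wordsBefore ++ wordsAfter ++
    (List.range 7).flatMap fun s => (List.range 3).map fun i => rootWord s ++ [i]

theorem lt_of_mem_reflectionWords : ∀ u ∈ reflectionWords, ∀ s ∈ u, s < 6 := by decide

/-- A spanning tree of the orbit of the `63` mirrors of the reflections of the Weyl group of type
`E₇`, rooted at the mirror `143` of the simple reflection `0`. -/
def mirrorTree : ℕ := growTree 7 reflectionMove 143 256 14 0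

set_option maxRecDepth 100000 in
theorem isTouched_mirrorTree : strictFold letterMove (rootWord 0) basePoint = 143 ∧
    ∀ u ∈ reflectionWords,
      isTouched 7 143 mirrorTree (strictFold letterMove u basePoint) = true := by
  refine of_decide_force mirrorTree ?_
  delta mirrorTree reflectionMove letterMove
  refine of_decide_force pointTable ?_
  decide +kernel

theorem transposition_mem_reflectionGroup {u : List ℕ} (hu : u ∈ reflectionWords) :
    transposition (wordProd letter u)⁻¹ ∈ reflectionGroup := by
  have hacts : ActsBy pointHom reflection 7 reflectionMove :=
    ⟨actsBy_reflection.mul_self, fun s hs => pointHom_reflection hs⟩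
  obtain ⟨g, hg, hgu⟩ := exists_mem_of_isTouched_growTree hacts (isTouched_mirrorTree.2 u hu)
  have hroot := lt_of_mem_rootWord 0 (by norm_num)
  have : pointHom (g * (wordProd letter (rootWord 0))⁻¹) basePoint =
      pointHom (wordProd letter u)⁻¹ basePoint := by
    rw [map_mul, Equiv.Perm.mul_apply, pointHom_inv_wordProd hroot, isTouched_mirrorTree.1, hgu,
      pointHom_inv_wordProd (lt_of_mem_reflectionWords u hu)]
  rw [transposition, ← conj_eq_conj_of_apply_eq commute_letter_five_of_pointHom this, ← conj_conj]
  exact mul_mem (mul_mem hg (mem_lettersClosure (by norm_num))) (inv_mem hg)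

theorem wordProd_flatMap_transpositionWord_mem {l : List (List ℕ)} (hl : l ⊆ reflectionWords) :
    wordProd letter (l.flatMap transpositionWord) ∈ reflectionGroup := by
  rw [wordProd_flatMap]
  refine wordProd_mem fun u hu => ?_
  rw [wordProd_transpositionWord]
  exact transposition_mem_reflectionGroup (hl hu)

theorem letter_five_mem_reflectionGroup : letter 5 ∈ reflectionGroup := by
  have hred : titsReduce (coxeterMatrix thetaDiagram)
      (wordsBefore.flatMap transpositionWord ++ 5 :: wordsAfter.flatMap transpositionWord ++
        ([4, 5, 0] ++ relatorA ++ [4, 5, 0].reverse).reverse) = [] := by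
    decide +kernel
  have hprod := wordProd_letter_eq_of_titsReduce hred
  have hA : wordProd letter relatorA = 1 := wordProd_letter_thetaRelators (.head _)
  rw [wordProd_append _ [4, 5, 0].reverse, wordProd_append [4, 5, 0], hA,
    wordProd_reverse letter_mul_self, mul_one, mul_inv_cancel, wordProd_append, wordProd_cons,
    ← mul_assoc] at hprod
  have hbefore := wordProd_flatMap_transpositionWord_mem (l := wordsBefore) (by decide)
  have hafter := wordProd_flatMap_transpositionWord_mem (l := wordsAfter) (by decide)
  rw [← reflectionGroup.mul_mem_cancel_left hbefore,
    ← reflectionGroup.mul_mem_cancel_right hafter, hprod]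
  exact one_mem _

theorem letter_three_mem_reflectionGroup : letter 3 ∈ reflectionGroup := by
  have hword : wordProd letter (transpositionWord [4, 3, 5, 4]) = wordProd letter [3] :=
    wordProd_letter_eq_of_titsReduce (by decide +kernel)
  rw [wordProd_transpositionWord] at hword
  have hmem := transposition_mem_reflectionGroup (u := [4, 3, 5, 4]) (by decide)
  rwa [hword, wordProd_cons, wordProd_nil, mul_one] at hmem

end Membership

section Stabilizer

/-- The subgroup of `Theta` generated by `a, b, c`. -/
def symmetricSubgroup : Subgroup Theta := lettersClosure letter 3

theorem pointHom_reflectionGroup {g : Theta} (hg : g ∈ reflectionGroup) {x : ℕ}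
    (hx : x ∈ [basePoint, 769, 770, 771]) : pointHom g x = x := by
  refine actsBy_reflection.apply_eq_of_forall_move (fun s hs => ?_) hg
  have h : ∀ x ∈ [basePoint, 769, 770, 771], ∀ s < 7, reflectionMove s x = x := by
    delta reflectionMove letterMove
    refine of_decide_force pointTable ?_
    decide +kernel
  rw [← actsBy_reflection.apply s hs, pointHom_reflection hs, h x hx s hs]

set_option maxRecDepth 100000 in
theorem countCosets_symmetricSubgroup : ∀ j < 3, 769 + j < 772 ∧ j + 2 ≠ 0 ∧
    (∀ s < j, letterMove s (769 + j) = 769 + j) ∧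
    countCosets (j + 1) letterMove (769 + j) 772
      (coxeterRelators (coxeterMatrix thetaDiagram) (j + 1)) ((List.range j).map fun s => [s])
      3 3 = j + 2 := by
  delta letterMove
  refine of_decide_force pointTable ?_
  decide +kernel

theorem isCoxeterChain_letter : IsCoxeterChain 3 letterMove pointHom letter
    (coxeterMatrix thetaDiagram) (769 + ·) (· + 2) 772 3 3 where
  acts := actsBy_pointHom.mono (by norm_num)
  wordProd_relators :=
    wordProd_coxeterRelators.mpr fun t _ s _ => letter_mul_pow_coxeterMatrix s t
  enumeration := countCosets_symmetricSubgroup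

theorem card_symmetricSubgroup : Nat.card symmetricSubgroup = 24 :=
  isCoxeterChain_letter.card_lettersClosure.trans (by decide)

theorem disjoint_symmetricSubgroup_reflectionGroup :
    Disjoint symmetricSubgroup reflectionGroup := by
  rw [Subgroup.disjoint_def]
  intro g hsymm hrefl
  refine isCoxeterChain_letter.eq_one_of_apply_base hsymm fun j hj =>
    pointHom_reflectionGroup hrefl ?_
  interval_cases j <;> simp

theorem letter_conj_reflection_mem {i s : ℕ} (hi : i < 3) (hs : s < 7) :
    letter i * reflection s * (letter i)⁻¹ ∈ reflectionGroup := by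
  have hmem : rootWord s ++ [i] ∈ reflectionWords :=
    List.mem_append_right _ (List.mem_flatMap.mpr
      ⟨s, List.mem_range.mpr hs, List.mem_map.mpr ⟨i, List.mem_range.mpr hi, rfl⟩⟩)
  have h := transposition_mem_reflectionGroup hmem
  rwa [wordProd_append, mul_inv_rev, wordProd_cons, wordProd_nil, mul_one,
    inv_eq_of_mul_eq_one_left (letter_mul_self i), transposition, ← conj_conj] at h

theorem symmetricSubgroup_le_normalizer :
    symmetricSubgroup ≤ Subgroup.normalizer (reflectionGroup : Set Theta) := by
  rw [symmetricSubgroup, lettersClosure, Subgroup.closure_le]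
  rintro _ ⟨i, hi, rfl⟩
  have hle : reflectionGroup ≤ reflectionGroup.comap (MulAut.conj (letter i)).toMonoidHom := by
    nth_rewrite 1 [reflectionGroup, lettersClosure]
    rw [Subgroup.closure_le]
    rintro _ ⟨s, hs, rfl⟩
    exact letter_conj_reflection_mem hi hs
  have hinv : (letter i)⁻¹ = letter i := inv_eq_of_mul_eq_one_left (letter_mul_self i)
  refine Subgroup.mem_normalizer_iff.mpr fun x => ⟨fun hx => hle hx, fun hx => ?_⟩
  have := hle hx
  simpa [mul_assoc, hinv, letter_mul_self, ← mul_assoc (letter i) (letter i)] using this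

/-- The stabilizer of `basePoint` in `Theta`. -/
def baseStabilizer : Subgroup Theta := symmetricSubgroup ⊔ reflectionGroup

theorem card_baseStabilizer : Nat.card baseStabilizer = 24 * 2903040 := by
  rw [baseStabilizer, card_sup_eq_mul disjoint_symmetricSubgroup_reflectionGroup
    symmetricSubgroup_le_normalizer, card_symmetricSubgroup, card_reflectionGroup]

theorem pointHom_baseStabilizer {h : Theta} (hh : h ∈ baseStabilizer) :
    pointHom h basePoint = basePoint := by
  have hletter : ∀ s < 3, letterMove s basePoint = basePoint := by
    delta letterMove
    refine of_decide_force pointTable ?_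
    decide +kernel
  have hle : baseStabilizer ≤ (MulAction.stabilizer (Equiv.Perm ℕ) basePoint).comap pointHom :=
    sup_le
      (fun _ => (actsBy_pointHom.mono (by norm_num)).apply_eq_of_forall_move hletter)
      fun _ hg => pointHom_reflectionGroup hg (.head _)
  exact hle hh

theorem wordProd_stabilizerWords_mem :
    ∀ u ∈ stabilizerWords, wordProd letter u ∈ baseStabilizer := by
  have hsymm (i : ℕ) (hi : i < 3) : letter i ∈ baseStabilizer :=
    Subgroup.mem_sup_left (mem_lettersClosure hi)
  have htransp (u : List ℕ) (hu : u ∈ reflectionWords) :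
      wordProd letter (transpositionWord u) ∈ baseStabilizer := by
    rw [wordProd_transpositionWord]
    exact Subgroup.mem_sup_right (transposition_mem_reflectionGroup hu)
  simp only [stabilizerWords, List.map_cons, List.map_nil, List.cons_append, List.nil_append,
    List.forall_mem_cons, List.not_mem_nil, false_imp_iff, implies_true, and_true, wordProd_cons,
    wordProd_nil, mul_one]
  exact ⟨hsymm 0 (by norm_num), hsymm 1 (by norm_num), hsymm 2 (by norm_num),
    Subgroup.mem_sup_right letter_three_mem_reflectionGroup,
    Subgroup.mem_sup_right letter_five_mem_reflectionGroup,
    htransp _ (by decide), htransp _ (by decide), htransp _ (by decide), htransp _ (by decide)⟩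

theorem index_baseStabilizer : baseStabilizer.index = 360 := by
  have E := isCosetEnumeration_stabilizerWords (fun _ => pointHom_baseStabilizer)
    wordProd_stabilizerWords_mem
  rw [← Subgroup.relIndex_top_right, ← lettersClosure_letter, E.relIndex]

end Stabilizer

/-- Theta is finite of order 2^16 * 3^7 * 5^2 * 7 = 25082265600,
the order of S_4 x (O_8^+(2):S_3). -/
theorem stmt_0 : Finite Theta ∧ Nat.card Theta = 2 ^ 16 * 3 ^ 7 * 5 ^ 2 * 7 := by
  have hcard : Nat.card Theta = 2 ^ 16 * 3 ^ 7 * 5 ^ 2 * 7 := by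
    rw [← baseStabilizer.card_mul_index, card_baseStabilizer, index_baseStabilizer]
    norm_num
  exact ⟨Nat.finite_of_card_ne_zero (by rw [hcard]; norm_num), hcard⟩
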